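/- arXiv:2409.00380 — 2 statements merged into one kernel-verified Lean document; each statement's English description precedes it below -/
import Mathlib

section
/- Let m ≥ 2 and n ≥ 1 with n + 1 not divisible by m, let ζ be a primitive nm-th root of unity, and let g ∈ G(m,m,n+1) ⊂ GL_{n+1}(C) be the monomial matrix whose upper-left (n × n)-block is the companion-type matrix sending e_i ↦ e_{i−1} (2 ≤ i ≤ n) and e_1 ↦ ζ^n e_n, and whose last diagonal entry is ζ^{−n}. Let E be the ζ^n-eigenspace of g^n. Then E = C e_1 ⊕ ... ⊕ C e_n, the subgroup N_E = {s ∈ G(m,m,n+1) : s(E) = E} consists exactly of those monomial matrices in G(m,m,n+1) fixing the line C e_{n+1}, and the restriction of N_E to E equals G(m,1,n) ⊂ GL_n(C); that is, the m-reflection subquotient of G(m,m,n+1) is G(m,1,n). -/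
/-!
An element of `G(m,1,n)` lifts uniquely to an element of `G(m,m,n+1)` fixing the line `ℂ e_{n+1}`:
the last diagonal entry must be the inverse of the product of the other nonzero entries. The matrix
`g` is the lift of an `n × n` monomial matrix whose permutation is an `n`-cycle. The `n`-th power of
such a matrix is the product `a = ζ ^ n` of its nonzero entries times the identity, since each
`e_i` travels once around the cycle. So `g ^ n` is `a` on `ℂ e_1 ⊕ ⋯ ⊕ ℂ e_n` and `a⁻ⁿ` on
`ℂ e_{n+1}`, and `a⁻ⁿ ≠ a` because `a` has order `m ∤ n + 1`. A monomial matrix preserves this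
hyperplane exactly when its permutation fixes `n + 1`, that is, when it fixes the line
`ℂ e_{n+1}`; restricting such matrices to the hyperplane gives all of `G(m,1,n)` by the lift.
-/

open Matrix MvPolynomial

namespace Paper

noncomputable section

/-- The standard Hermitian inner product `(v, w) = Σ v_i conj(w_i)` on `ℂ^N`. -/
def herm {N : ℕ} (v w : Fin N → ℂ) : ℂ := ∑ i, v i * (starRingEnd ℂ) (w i)

/-- The reflection `s(v, λ) : w ↦ w - (1 - λ) ((w,v)/(v,v)) v` with root `v` and
nontrivial eigenvalue `λ`, as a matrix. -/
def reflMat {N : ℕ} (v : Fin N → ℂ) (lam : ℂ) : Matrix (Fin N) (Fin N) ℂ :=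
  Matrix.of fun i j =>
    (if i = j then (1 : ℂ) else 0) - (1 - lam) * v i * (starRingEnd ℂ) (v j) / herm v v

/-- The monomial matrix `ι(θ, σ)` with `e_i ↦ θ_{σ(i)} e_{σ(i)}`. -/
def monomialMatrix {N : ℕ} (θ : Fin N → ℂ) (σ : Equiv.Perm (Fin N)) :
    Matrix (Fin N) (Fin N) ℂ :=
  Matrix.of fun j i => if j = σ i then θ (σ i) else 0

/-- The imprimitive reflection group `G(m, p, N)`: all monomial `N × N` matrices whose
nonzero entries are `m`-th roots of unity and whose product of nonzero entries is an
`(m/p)`-th root of unity. -/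
def Gimp (m p N : ℕ) : Set (Matrix (Fin N) (Fin N) ℂ) :=
  {M | ∃ (θ : Fin N → ℂ) (σ : Equiv.Perm (Fin N)),
    (∀ i, θ i ^ m = 1) ∧ (∏ i, θ i) ^ (m / p) = 1 ∧ M = monomialMatrix θ σ}

/-- The `μ`-eigenspace of (the linear map of) a matrix. -/
def eigSpace {n : ℕ} (M : Matrix (Fin n) (Fin n) ℂ) (μ : ℂ) : Submodule ℂ (Fin n → ℂ) :=
  Module.End.eigenspace M.mulVecLin μ

lemma prod_range_card_pow_apply {ι M : Type*} [CommMonoid M] {s : Finset ι}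
    {τ : Equiv.Perm ι} (hτ : τ.IsCycleOn s) {i : ι} (hi : i ∈ s) (f : ι → M) :
    ∏ l ∈ Finset.range s.card, f ((τ ^ l) i) = ∏ j ∈ s, f j := by
  refine Finset.prod_bij (fun l _ => (τ ^ l) i) ?_ ?_ ?_ fun _ _ => rfl
  · exact fun l _ => (hτ.1.perm_pow l).mapsTo hi
  · intro k hk l hl hkl
    exact ((hτ.pow_apply_eq_pow_apply hi).mp hkl).eq_of_lt_of_lt
      (Finset.mem_range.mp hk) (Finset.mem_range.mp hl)
  · intro j hj
    obtain ⟨l, hl, hlj⟩ := hτ.exists_pow_eq hi hj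
    exact ⟨l, Finset.mem_range.mpr hl, hlj⟩

lemma isCycleOn_finRotate : ∀ n : ℕ, (finRotate n).IsCycleOn Set.univ
  | 0 => Equiv.Perm.isCycleOn_of_subsingleton _ _
  | 1 => Equiv.Perm.isCycleOn_of_subsingleton _ _
  | n + 2 => by
    convert! (isCycle_finRotate (n := n)).isCycleOn
    ext i
    simp

section MonomialMatrix

variable {N : ℕ} (θ : Fin N → ℂ) (σ : Equiv.Perm (Fin N))

lemma monomialMatrix_mulVec_apply (v : Fin N → ℂ) (i : Fin N) :
    (monomialMatrix θ σ *ᵥ v) (σ i) = θ (σ i) * v i := by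
  simp [monomialMatrix, mulVec, dotProduct]

lemma monomialMatrix_mulVec_single (i : Fin N) :
    monomialMatrix θ σ *ᵥ Pi.single i 1 = θ (σ i) • (Pi.single (σ i) 1 : Fin N → ℂ) := by
  ext j
  by_cases h : j = σ i <;> simp [monomialMatrix, h]

lemma monomialMatrix_pow_mulVec_apply (v : Fin N → ℂ) (k : ℕ) (i : Fin N) :
    (monomialMatrix θ σ ^ k *ᵥ v) ((σ ^ k) i) =
      (∏ l ∈ Finset.range k, θ ((σ ^ l) (σ i))) * v i := by
  induction k with
  | zero => simp
  | succ k ih =>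
    rw [pow_succ' σ, Equiv.Perm.mul_apply, pow_succ', ← mulVec_mulVec,
      monomialMatrix_mulVec_apply, ih, Finset.prod_range_succ, ← Equiv.Perm.mul_apply (σ ^ k),
      ← pow_succ, pow_succ', Equiv.Perm.mul_apply]
    ring

variable {σ}

lemma monomialMatrix_pow_mulVec_of_isCycleOn (hσ : σ.IsCycleOn Set.univ) (v : Fin N → ℂ) :
    monomialMatrix θ σ ^ N *ᵥ v = (∏ i, θ i) • v := by
  have hcycle : σ.IsCycleOn (Finset.univ : Finset (Fin N)) := by rwa [Finset.coe_univ]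
  ext i
  have hclosed : (σ ^ N) i = i := by
    simpa using hcycle.pow_card_apply (Finset.mem_univ i)
  have horbit : ∏ l ∈ Finset.range N, θ ((σ ^ l) (σ i)) = ∏ j, θ j := by
    simpa using prod_range_card_pow_apply hcycle (Finset.mem_univ (σ i)) θ
  simpa only [hclosed, horbit, Pi.smul_apply, smul_eq_mul] using
    monomialMatrix_pow_mulVec_apply θ σ v N i

variable {θ}

lemma monomialMatrix_fixes_line_iff {i : Fin N} (hθ : θ (σ i) ≠ 0) :
    (∃ c : ℂ, monomialMatrix θ σ *ᵥ Pi.single i 1 = c • (Pi.single i 1 : Fin N → ℂ)) ↔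
      σ i = i := by
  rw [monomialMatrix_mulVec_single]
  refine ⟨fun ⟨c, hc⟩ => ?_, fun h => ⟨θ (σ i), by rw [h]⟩⟩
  by_contra hmoved
  have hzero : θ (σ i) = 0 := by simpa [hmoved] using congrFun hc (σ i)
  exact hθ hzero

lemma monomialMatrix_preserves_hyperplane_iff {i : Fin N} (hθ : θ i ≠ 0) :
    (∀ v : Fin N → ℂ, v i = 0 → (monomialMatrix θ σ *ᵥ v) i = 0) ↔ σ i = i := by
  obtain ⟨j, rfl⟩ := σ.surjective i
  simp only [monomialMatrix_mulVec_apply, mul_eq_zero, hθ, false_or, σ.injective.eq_iff]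
  refine ⟨fun h => ?_, fun h v hv => by rwa [h] at hv⟩
  by_contra hmoved
  simpa using h (Pi.single j 1) (Pi.single_eq_of_ne hmoved 1)

end MonomialMatrix

section Lift

variable {n : ℕ} (p : Fin (n + 1)) (θ : Fin n → ℂ) (τ : Equiv.Perm (Fin n))

/-- The permutation of `Fin (n + 1)` that fixes `p` and acts as `τ` on the other points, which
`p.succAbove` identifies with `Fin n`. -/
def extendPerm : Equiv.Perm (Fin (n + 1)) := τ.extendDomain (finSuccAboveEquiv p)

@[simp]
lemma extendPerm_apply_self : extendPerm p τ p = p :=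
  τ.extendDomain_apply_not_subtype (finSuccAboveEquiv p) (by simp)

@[simp]
lemma extendPerm_apply_succAbove (i : Fin n) :
    extendPerm p τ (p.succAbove i) = p.succAbove (τ i) :=
  τ.extendDomain_apply_image (finSuccAboveEquiv p) i

lemma exists_extendPerm_eq {σ : Equiv.Perm (Fin (n + 1))} (hσ : σ p = p) :
    ∃ τ, extendPerm p τ = σ := by
  have hmaps (i) : i ≠ p ↔ σ i ≠ p := by rw [← σ.injective.ne_iff, hσ]
  refine ⟨(finSuccAboveEquiv p).symm.permCongr (σ.subtypePerm fun i => (hmaps i).symm), ?_⟩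
  ext i : 1
  cases i using p.succAboveCases with
  | x => simp [hσ]
  | p i =>
    rw [extendPerm_apply_succAbove]
    exact congrArg Subtype.val ((finSuccAboveEquiv p).apply_symm_apply _)

lemma submatrix_monomialMatrix_extendPerm (η : Fin (n + 1) → ℂ) :
    (monomialMatrix η (extendPerm p τ)).submatrix p.succAbove p.succAbove =
      monomialMatrix (η ∘ p.succAbove) τ := by
  ext j i
  simp [monomialMatrix]

/-- The matrix over `Fin (n + 1)` that acts as `ι(θ, τ)` on the coordinates other than `p` and
scales `e_p` so that the product of the nonzero entries is `1`. -/
def monomialLift : Matrix (Fin (n + 1)) (Fin (n + 1)) ℂ :=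
  monomialMatrix (p.insertNth (α := fun _ => ℂ) (∏ i, θ i)⁻¹ θ) (extendPerm p τ)

lemma submatrix_monomialLift :
    (monomialLift p θ τ).submatrix p.succAbove p.succAbove = monomialMatrix θ τ := by
  rw [monomialLift, submatrix_monomialMatrix_extendPerm]
  congr 1
  ext i
  simp

lemma monomialLift_mulVec_apply_self (v : Fin (n + 1) → ℂ) :
    (monomialLift p θ τ *ᵥ v) p = (∏ i, θ i)⁻¹ * v p := by
  simpa [monomialLift] using
    monomialMatrix_mulVec_apply (p.insertNth (∏ i, θ i)⁻¹ θ) (extendPerm p τ) v p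

lemma monomialLift_mulVec_comp_succAbove (v : Fin (n + 1) → ℂ) :
    (monomialLift p θ τ *ᵥ v) ∘ p.succAbove = monomialMatrix θ τ *ᵥ (v ∘ p.succAbove) := by
  ext j
  obtain ⟨i, rfl⟩ := τ.surjective j
  rw [monomialMatrix_mulVec_apply, Function.comp_apply, ← extendPerm_apply_succAbove,
    monomialLift, monomialMatrix_mulVec_apply]
  simp

lemma monomialLift_pow_mulVec_apply_self (v : Fin (n + 1) → ℂ) (k : ℕ) :
    (monomialLift p θ τ ^ k *ᵥ v) p = (∏ i, θ i)⁻¹ ^ k * v p := by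
  induction k with
  | zero => simp
  | succ k ih =>
    rw [pow_succ', ← mulVec_mulVec, monomialLift_mulVec_apply_self, ih, pow_succ', mul_assoc]

lemma monomialLift_pow_mulVec_comp_succAbove (v : Fin (n + 1) → ℂ) (k : ℕ) :
    (monomialLift p θ τ ^ k *ᵥ v) ∘ p.succAbove = monomialMatrix θ τ ^ k *ᵥ (v ∘ p.succAbove) := by
  induction k with
  | zero => simp
  | succ k ih =>
    rw [pow_succ', ← mulVec_mulVec, monomialLift_mulVec_comp_succAbove, ih, mulVec_mulVec,
      ← pow_succ']

variable {θ τ}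

lemma mem_eigSpace_monomialLift_pow_iff (hτ : τ.IsCycleOn Set.univ) (hθ : ∏ i, θ i ≠ 0)
    (hne : (∏ i, θ i) ^ (n + 1) ≠ 1) (v : Fin (n + 1) → ℂ) :
    v ∈ eigSpace (monomialLift p θ τ ^ n) (∏ i, θ i) ↔ v p = 0 := by
  have hscalar (i : Fin n) :
      (monomialLift p θ τ ^ n *ᵥ v) (p.succAbove i) = (∏ i, θ i) * v (p.succAbove i) := by
    have h := monomialLift_pow_mulVec_comp_succAbove p θ τ v n
    rw [monomialMatrix_pow_mulVec_of_isCycleOn θ hτ] at h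
    exact congrFun h i
  have hlast : (∏ i, θ i)⁻¹ ^ n ≠ ∏ i, θ i := by
    rwa [inv_pow, ne_eq, inv_eq_iff_eq_inv, ← mul_eq_one_iff_eq_inv₀ hθ, ← pow_succ]
  rw [eigSpace, Module.End.mem_eigenspace_iff, mulVecLin_apply, _root_.funext_iff,
    Fin.forall_iff_succAbove p]
  simp only [monomialLift_pow_mulVec_apply_self, hscalar, Pi.smul_apply, smul_eq_mul,
    mul_eq_mul_right_iff, hlast, false_or, implies_true, and_true]

end Lift

section ImprimitiveGroup

variable {m n : ℕ}

lemma monomialLift_mem_Gimp (hm : m ≠ 0) (q : ℕ) (p : Fin (n + 1)) {θ : Fin n → ℂ}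
    (hθ : ∀ i, θ i ^ m = 1) (τ : Equiv.Perm (Fin n)) :
    monomialLift p θ τ ∈ Gimp m q (n + 1) := by
  have hprod : (∏ i, θ i) ^ m = 1 := by simp [← Finset.prod_pow, hθ]
  refine ⟨_, _, (Fin.forall_iff_succAbove p).mpr ⟨by simp [hprod], by simpa using hθ⟩, ?_, rfl⟩
  have hne : ∏ i, θ i ≠ 0 := (IsUnit.of_pow_eq_one hprod hm).ne_zero
  simp [Fin.prod_univ_succAbove _ p, hne]

lemma preserves_hyperplane_iff_fixes_line_of_mem_Gimp {q N : ℕ} (hm : m ≠ 0)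
    {M : Matrix (Fin N) (Fin N) ℂ} (hM : M ∈ Gimp m q N) (i : Fin N) :
    (∀ v : Fin N → ℂ, v i = 0 → (M *ᵥ v) i = 0) ↔
      ∃ c : ℂ, M *ᵥ Pi.single i 1 = c • (Pi.single i 1 : Fin N → ℂ) := by
  obtain ⟨θ, σ, hθ, -, rfl⟩ := hM
  have hne (j) : θ j ≠ 0 := (IsUnit.of_pow_eq_one (hθ j) hm).ne_zero
  rw [monomialMatrix_preserves_hyperplane_iff (hne i), monomialMatrix_fixes_line_iff (hne _)]

lemma image_submatrix_stabilizer_hyperplane (hm : m ≠ 0) (q : ℕ) (p : Fin (n + 1)) :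
    (fun M : Matrix (Fin (n + 1)) (Fin (n + 1)) ℂ => M.submatrix p.succAbove p.succAbove) ''
      {M | M ∈ Gimp m q (n + 1) ∧ ∀ v : Fin (n + 1) → ℂ, v p = 0 → (M *ᵥ v) p = 0} =
      Gimp m 1 n := by
  ext A
  constructor
  · rintro ⟨_, ⟨⟨θ, σ, hθ, -, rfl⟩, hstab⟩, rfl⟩
    have hne : θ p ≠ 0 := (IsUnit.of_pow_eq_one (hθ p) hm).ne_zero
    obtain ⟨τ, rfl⟩ :=
      exists_extendPerm_eq p ((monomialMatrix_preserves_hyperplane_iff hne).mp hstab)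
    refine ⟨θ ∘ p.succAbove, τ, fun i => hθ _, ?_, submatrix_monomialMatrix_extendPerm p τ θ⟩
    simp [← Finset.prod_pow, hθ]
  · rintro ⟨θ, τ, hθ, -, rfl⟩
    refine ⟨monomialLift p θ τ, ⟨monomialLift_mem_Gimp hm q p hθ τ, fun v hv => ?_⟩,
      submatrix_monomialLift p θ τ⟩
    rw [monomialLift_mulVec_apply_self, hv, mul_zero]

end ImprimitiveGroup

section TwistedCycle

/-- The `(n + 1) × (n + 1)` matrix with `e_i ↦ e_{i-1}` for `2 ≤ i ≤ n`, `e_1 ↦ a e_n` and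
`e_{n+1} ↦ a⁻¹ e_{n+1}`; the regular element `g` of the theorem is the case `a = ζ ^ n`.
Indices are `0`-based in the code. -/
def twistedCycle (n : ℕ) (a : ℂ) : Matrix (Fin (n + 1)) (Fin (n + 1)) ℂ :=
  Matrix.of fun j i =>
    if i.1 = 0 then (if j.1 = n - 1 then a else 0)
    else if i.1 = n then (if j.1 = n then a⁻¹ else 0)
    else if j.1 + 1 = i.1 then 1 else 0

lemma twistedCycle_eq_monomialLift (k : ℕ) (a : ℂ) :
    twistedCycle (k + 1) a =
      monomialLift (Fin.last (k + 1)) (Pi.mulSingle (Fin.last k) a) (finRotate (k + 1))⁻¹ := by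
  have hzero : (finRotate (k + 1))⁻¹ 0 = Fin.last k := by
    rw [Equiv.Perm.inv_eq_iff_eq, finRotate_last]
  have hsucc (l : Fin k) : (finRotate (k + 1))⁻¹ l.succ = l.castSucc := by
    rw [Equiv.Perm.inv_eq_iff_eq, finRotate_apply, Fin.coeSucc_eq_succ]
  ext j i
  rw [twistedCycle, monomialLift, monomialMatrix, of_apply, of_apply]
  cases i using (Fin.last (k + 1)).succAboveCases with
  | x =>
    rw [extendPerm_apply_self]
    cases j using (Fin.last (k + 1)).succAboveCases with
    | x => simp
    | p j => simp [j.2.ne]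
  | p i =>
    rw [extendPerm_apply_succAbove, Fin.insertNth_apply_succAbove]
    cases i using Fin.cases with
    | zero => simp [hzero, Fin.ext_iff]
    | succ l =>
      have hl := l.2.ne
      simp [hsucc, Fin.ext_iff, (Fin.castSucc_lt_last l).ne, hl]

lemma mem_eigSpace_twistedCycle_pow_iff {n : ℕ} (hn : n ≠ 0) {a : ℂ} (ha : a ≠ 0)
    (han : a ^ (n + 1) ≠ 1) (v : Fin (n + 1) → ℂ) :
    v ∈ eigSpace (twistedCycle n a ^ n) a ↔ v (Fin.last n) = 0 := by
  obtain ⟨k, rfl⟩ := Nat.exists_eq_succ_of_ne_zero hn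
  have hprod : ∏ i, (Pi.mulSingle (Fin.last k) a : Fin (k + 1) → ℂ) i = a := by simp
  have hcycle := Equiv.Perm.isCycleOn_inv.mpr (isCycleOn_finRotate (k + 1))
  have hmem := mem_eigSpace_monomialLift_pow_iff (Fin.last (k + 1)) hcycle
    (by rwa [hprod]) (by rwa [hprod]) v
  rwa [hprod, ← twistedCycle_eq_monomialLift] at hmem

lemma twistedCycle_mem_Gimp {m n : ℕ} (hm : m ≠ 0) (hn : n ≠ 0) (q : ℕ) {a : ℂ}
    (ham : a ^ m = 1) : twistedCycle n a ∈ Gimp m q (n + 1) := by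
  obtain ⟨k, rfl⟩ := Nat.exists_eq_succ_of_ne_zero hn
  rw [twistedCycle_eq_monomialLift]
  refine monomialLift_mem_Gimp hm q _ (fun i => ?_) _
  by_cases hi : i = Fin.last k <;> simp [hi, ham]

end TwistedCycle

theorem statement_7_general {m n : ℕ} (hm : m ≠ 0) (hn : n ≠ 0) {a : ℂ} (ham : a ^ m = 1)
    (han : a ^ (n + 1) ≠ 1) (E : Submodule ℂ (Fin (n + 1) → ℂ))
    (hE : E = eigSpace (twistedCycle n a ^ n) a) :
    twistedCycle n a ∈ Gimp m m (n + 1) ∧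
    (∀ v : Fin (n + 1) → ℂ, v ∈ E ↔ v (Fin.last n) = 0) ∧
    (∀ M ∈ Gimp m m (n + 1),
      ((∀ v ∈ E, M *ᵥ v ∈ E) ↔
        ∃ c : ℂ, M *ᵥ Pi.single (Fin.last n) 1 =
          c • (Pi.single (Fin.last n) 1 : Fin (n + 1) → ℂ))) ∧
    (fun M : Matrix (Fin (n + 1)) (Fin (n + 1)) ℂ => M.submatrix Fin.castSucc Fin.castSucc) ''
      {M | M ∈ Gimp m m (n + 1) ∧ ∀ v ∈ E, M *ᵥ v ∈ E} = Gimp m 1 n := by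
  have hmem (v : Fin (n + 1) → ℂ) : v ∈ E ↔ v (Fin.last n) = 0 := by
    rw [hE, mem_eigSpace_twistedCycle_pow_iff hn (IsUnit.of_pow_eq_one ham hm).ne_zero han]
  refine ⟨twistedCycle_mem_Gimp hm hn m ham, hmem, ?_, ?_⟩ <;> simp only [hmem]
  · exact fun M hM => preserves_hyperplane_iff_fixes_line_of_mem_Gimp hm hM _
  · simpa only [Fin.succAbove_last] using image_submatrix_stabilizer_hyperplane hm m (Fin.last n)

/-- Let `m ≥ 2`, `n ≥ 1` with `n + 1` not divisible by `m`, `ζ` a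
primitive `nm`-th root of unity, and `g ∈ G(m,m,n+1)` the monomial matrix with
`e_i ↦ e_{i-1}` (`2 ≤ i ≤ n`), `e_1 ↦ ζ^n e_n` and last diagonal entry `ζ^{-n}`
(indices `0`-based below).  Let `E` be the `ζ^n`-eigenspace of `g^n`.  Then
`E = ℂe_1 ⊕ ... ⊕ ℂe_n` (equivalently `E = {v : v_{n+1} = 0}`), `N_E` consists exactly
of the elements of `G(m,m,n+1)` fixing the line `ℂ e_{n+1}`, and the restriction of
`N_E` to `E` (as `n × n` matrices in the coordinates `u_1, ..., u_n`) equals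
`G(m,1,n)`: the `m`-reflection subquotient of `G(m,m,n+1)` is `G(m,1,n)`. -/
theorem statement_7 (m n : ℕ) (hm : 2 ≤ m) (hn : 1 ≤ n) (hnd : ¬ m ∣ (n + 1))
    (ζ : ℂ) (hζ : IsPrimitiveRoot ζ (n * m))
    (g : Matrix (Fin (n + 1)) (Fin (n + 1)) ℂ)
    (hg : g = Matrix.of fun j i : Fin (n + 1) =>
      if i.1 = 0 then (if j.1 = n - 1 then ζ ^ n else 0)
      else if i.1 = n then (if j.1 = n then (ζ ^ n)⁻¹ else 0)
      else if j.1 + 1 = i.1 then 1 else 0)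
    (E : Submodule ℂ (Fin (n + 1) → ℂ))
    (hE : E = eigSpace (g ^ n) (ζ ^ n)) :
    g ∈ Gimp m m (n + 1) ∧
    (∀ v : Fin (n + 1) → ℂ, v ∈ E ↔ v (Fin.last n) = 0) ∧
    (∀ M ∈ Gimp m m (n + 1),
      ((∀ v ∈ E, M.mulVec v ∈ E) ↔
        ∃ c : ℂ, M.mulVec (Pi.single (Fin.last n) 1) =
          c • (Pi.single (Fin.last n) 1 : Fin (n + 1) → ℂ))) ∧
    (fun M : Matrix (Fin (n + 1)) (Fin (n + 1)) ℂ =>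
        M.submatrix (Fin.castSucc) (Fin.castSucc)) ''
      {M | M ∈ Gimp m m (n + 1) ∧ ∀ v ∈ E, M.mulVec v ∈ E} = Gimp m 1 n := by
  subst hg
  have hroot : IsPrimitiveRoot (ζ ^ n) m := hζ.pow (by positivity) rfl
  exact statement_7_general (by lia) (by lia) hroot.pow_eq_one
    (mt (hroot.dvd_of_pow_eq_one (n + 1)) hnd) E hE

end
end Paper
end

section
/- Let ζ = e^{πi/6}, let G_35 = E_6 ⊂ GL_6(C) be the finite complex reflection group generated by the six order-2 reflections s(α_1), ..., s(α_6) with the simple roots α_1 = e_2 − e_3 + (1/√2)e_5 + √(3/2)e_6, α_2 = e_3 − e_4 − √2 e_5, α_3 = 2e_4, α_4 = e_3 − e_4 + √2 e_5, α_5 = e_2 − e_3 − (1/√2)e_5 − √(3/2)e_6, α_6 = e_1 − e_2 − e_3 − e_4, and let g = s(α_1)s(α_2)s(α_3)s(α_4)s(α_5)s(α_6) be the resulting Coxeter element. Let E be the ζ^6-eigenspace (i.e. the (−1)-eigenspace) of g^6, a 4-dimensional subspace, let N_E = {s ∈ G_35 : s(E) ⊆ E}, and let π_E be restriction to E. Then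 there exists a C-linear isomorphism ψ : E → C^4 such that ψ ∘ π_E(N_E) ∘ ψ^{−1} = G_28, where G_28 = F_4 ⊂ GL_4(C) is generated by the four order-2 reflections with roots β_1 = e_1 − e_2, β_2 = e_2 − e_3, β_3 = √2 e_3, β_4 = −(1/√2)(e_1 + e_2 + e_3 + e_4). In other words, the 2-reflection subquotient of G_35 = E_6 is isomorphic to G_28 = F_4. -/
/-!
In the basis of simple roots, `W(E₆)` acts by integer matrices preserving the Cartan form, and the
`(-1)`-eigenspace `E` of the sixth power of the Coxeter element is spanned by four orthogonal
vectors of norm 4 in the root lattice. An element of `N_E`, written in this orthogonal frame, is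
therefore an orthogonal `4 × 4` matrix with entries in `½ℤ`. All such matrices lie in `W(F₄)`: the
integral ones are the signed permutations, and a matrix with a column of entries `±½` becomes
integral after multiplication by signs and by the reflection in `(½, ½, ½, ½)`. Conversely, each
simple reflection of `F₄` lifts to an explicit word in the simple reflections of `E₆`.
-/

open Matrix MvPolynomial

namespace Paper

noncomputable section

section Subquotient

variable {m n p R : Type*} [Fintype m] [Fintype n] [Fintype p] [DecidableEq m] [DecidableEq n]
  [DecidableEq p] [CommRing R]

/-- The matrices through which elements of `H` act on the columns of `P`. If these columns form a
basis of a subspace `E`, then this is the group `π_E(N_E)` of restrictions to `E` of the elements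
of `H` preserving `E`, written in that basis. -/
def subquotient (H : Submonoid (Matrix m m R)) (P : Matrix m n R) :
    Submonoid (Matrix n n R) where
  carrier := {M' | ∃ M ∈ H, M * P = P * M'}
  one_mem' := ⟨1, one_mem H, by rw [Matrix.one_mul, Matrix.mul_one]⟩
  mul_mem' := by
    rintro M' N' ⟨M, hM, hMP⟩ ⟨N, hN, hNP⟩
    exact ⟨M * N, mul_mem hM hN, by
      rw [Matrix.mul_assoc, hNP, ← Matrix.mul_assoc, hMP, Matrix.mul_assoc]⟩

lemma mem_subquotient {H : Submonoid (Matrix m m R)} {P : Matrix m n R} {M' : Matrix n n R} :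
    M' ∈ subquotient H P ↔ ∃ M ∈ H, M * P = P * M' :=
  Iff.rfl

lemma mem_subquotient_iff_mulVec {H : Submonoid (Matrix m m R)} {P : Matrix m n R}
    {M' : Matrix n n R} :
    M' ∈ subquotient H P ↔ ∃ M ∈ H,
      (∀ v ∈ LinearMap.range P.mulVecLin, M *ᵥ v ∈ LinearMap.range P.mulVecLin) ∧
        ∀ t, M *ᵥ P.mulVecLin t = P.mulVecLin (M' *ᵥ t) := by
  have key (M : Matrix m m R) :
      M * P = P * M' ↔ ∀ t, M *ᵥ P.mulVecLin t = P.mulVecLin (M' *ᵥ t) := by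
    simp only [mulVecLin_apply, mulVec_mulVec]
    exact ⟨fun h t => by rw [h], fun h => ext_of_mulVec_single fun i => h (Pi.single i 1)⟩
  simp only [mem_subquotient, key]
  refine exists_congr fun M => and_congr_right fun _ => ⟨fun h => ⟨?_, h⟩, And.right⟩
  rintro _ ⟨t, rfl⟩
  exact ⟨M' *ᵥ t, (h t).symm⟩

lemma subquotient_mono {H H' : Submonoid (Matrix m m R)} (h : H ≤ H') (P : Matrix m n R) :
    subquotient H P ≤ subquotient H' P :=
  fun _ ⟨M, hM, hMP⟩ => ⟨M, h hM, hMP⟩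

lemma subquotient_subquotient_le (H : Submonoid (Matrix m m R)) (P : Matrix m n R)
    (Q : Matrix n p R) : subquotient (subquotient H P) Q ≤ subquotient H (P * Q) := by
  rintro M'' ⟨M', ⟨M, hM, hMP⟩, hMQ⟩
  exact ⟨M, hM, by rw [← Matrix.mul_assoc, hMP, Matrix.mul_assoc, hMQ, Matrix.mul_assoc]⟩

end Subquotient

section Weyl

variable {ι R S : Type*} [DecidableEq ι] [CommRing R] [CommRing S]

/-- The `i`-th simple reflection of the generalized Cartan matrix `C`, in the basis of simple
roots: it sends the `j`-th simple root `α j` to `α j - C i j • α i`. -/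
def simpleReflection (C : Matrix ι ι R) (i : ι) : Matrix ι ι R :=
  1 - vecMulVec (Pi.single i 1) (C i)

lemma simpleReflection_map (f : R →+* S) (C : Matrix ι ι R) (i : ι) :
    simpleReflection (C.map f) i = (simpleReflection C i).map f := by
  ext j k
  simp [simpleReflection, vecMulVec_apply, one_apply, Pi.single_apply, apply_ite f]

variable [Fintype ι]

/-- The Weyl group of the Cartan matrix `C`, acting on coordinates in the basis of simple
roots. -/
def weylGroup (C : Matrix ι ι R) : Submonoid (Matrix ι ι R) :=
  Submonoid.closure (Set.range (simpleReflection C))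

lemma simpleReflection_mem_weylGroup (C : Matrix ι ι R) (i : ι) :
    simpleReflection C i ∈ weylGroup C :=
  Submonoid.subset_closure ⟨i, rfl⟩

lemma weylGroup_map (f : R →+* S) (C : Matrix ι ι R) :
    weylGroup (C.map f) = (weylGroup C).map f.mapMatrix := by
  rw [weylGroup, weylGroup, MonoidHom.map_mclosure, ← Set.range_comp]
  congr 2
  exact funext (simpleReflection_map f C)

lemma transpose_simpleReflection_mul_mul {C : Matrix ι ι R} (hC : C.IsSymm) {i : ι}
    (hi : C i i = 2) : (simpleReflection C i)ᵀ * C * simpleReflection C i = C := by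
  have hcol : C *ᵥ Pi.single i 1 = C i := by
    rw [mulVec_single_one]
    exact congrFun hC i
  have hrow : Pi.single i 1 ᵥ* C = C i := by
    rw [single_one_vecMul]
    rfl
  have hright : C * simpleReflection C i = C - vecMulVec (C i) (C i) := by
    rw [simpleReflection, Matrix.mul_sub, Matrix.mul_one, mul_vecMulVec, hcol]
  rw [Matrix.mul_assoc, hright, simpleReflection, transpose_sub, transpose_one, transpose_vecMulVec,
    Matrix.sub_mul, Matrix.one_mul, Matrix.mul_sub, vecMulVec_mul, hrow, vecMulVec_mul_vecMulVec,
    single_one_dotProduct, hi, vecMulVec_smul, two_smul]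
  abel

lemma transpose_mul_mul_of_mem_weylGroup {C : Matrix ι ι R} (hC : C.IsSymm)
    (hdiag : ∀ i, C i i = 2) {N : Matrix ι ι R} (hN : N ∈ weylGroup C) : Nᵀ * C * N = C := by
  induction hN using Submonoid.closure_induction with
  | mem _ h =>
    obtain ⟨i, rfl⟩ := h
    exact transpose_simpleReflection_mul_mul hC (hdiag i)
  | one => simp
  | mul x y _ _ hx hy =>
    calc (x * y)ᵀ * C * (x * y) = yᵀ * (xᵀ * C * x) * y := by
          simp only [transpose_mul, Matrix.mul_assoc]
      _ = C := by rw [hx, hy]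

/-- The Coxeter element of the Weyl group of `C`: the product of the simple reflections in
increasing order of their indices. -/
def coxeterElement {n : ℕ} (C : Matrix (Fin n) (Fin n) R) : Matrix (Fin n) (Fin n) R :=
  (List.ofFn (simpleReflection C)).prod

lemma coxeterElement_map {n : ℕ} (f : R →+* S) (C : Matrix (Fin n) (Fin n) R) :
    coxeterElement (C.map f) = (coxeterElement C).map f := by
  rw [coxeterElement, funext (simpleReflection_map f C), coxeterElement,
    ← RingHom.mapMatrix_apply f (List.prod _), map_list_prod, List.map_ofFn]
  rfl

end Weyl

section ReflectionGroup

variable {n m : ℕ}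

/-- The reflection group generated by the order-two reflections with roots `v i`. -/
def reflectionGroup (v : Fin m → Fin n → ℂ) : Submonoid (Matrix (Fin n) (Fin n) ℂ) :=
  Submonoid.closure {M | ∃ i, M = reflMat (v i) (-1)}

/-- The matrix whose columns are the roots `v i`. -/
def rootMatrix (v : Fin m → Fin n → ℂ) : Matrix (Fin n) (Fin m) ℂ := (of v)ᵀ

/-- The Cartan matrix of a family of roots, with entries `2 (v j, v i) / (v i, v i)`. -/
def cartanOf (v : Fin m → Fin n → ℂ) : Matrix (Fin m) (Fin m) ℂ :=
  of fun i j => 2 * herm (v j) (v i) / herm (v i) (v i)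

lemma conjTranspose_rootMatrix_mul_rootMatrix (v : Fin m → Fin n → ℂ) (i j : Fin m) :
    ((rootMatrix v)ᴴ * rootMatrix v) i j = herm (v j) (v i) := by
  rw [mul_apply, herm]
  exact Finset.sum_congr rfl fun k _ => mul_comm _ _

lemma reflMat_neg_one (v : Fin n → ℂ) :
    reflMat v (-1) = 1 - (2 / herm v v) • vecMulVec v (star v) := by
  ext i j
  simp [reflMat, one_apply, vecMulVec_apply]
  ring

lemma reflMat_mul_rootMatrix (v : Fin m → Fin n → ℂ) (i : Fin m) :
    reflMat (v i) (-1) * rootMatrix v = rootMatrix v * simpleReflection (cartanOf v) i := by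
  have hcol : rootMatrix v *ᵥ Pi.single i 1 = v i := by
    rw [mulVec_single_one]
    rfl
  have hrow : (2 / herm (v i) (v i)) • (star (v i) ᵥ* rootMatrix v) = cartanOf v i := by
    ext j
    rw [Pi.smul_apply, vecMul, dotProduct_comm, smul_eq_mul, cartanOf, of_apply, div_mul_eq_mul_div]
    rfl
  rw [reflMat_neg_one, simpleReflection, Matrix.sub_mul, Matrix.mul_sub, Matrix.one_mul,
    Matrix.mul_one, mul_vecMulVec, hcol, Matrix.smul_mul, vecMulVec_mul, ← vecMulVec_smul, hrow]

lemma semiconjBy_rootMatrix_coxeterElement (v : Fin n → Fin n → ℂ) :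
    SemiconjBy (rootMatrix v) (coxeterElement (cartanOf v))
      (List.ofFn fun i => reflMat (v i) (-1)).prod := by
  rw [coxeterElement, List.ofFn_eq_map, List.ofFn_eq_map]
  induction List.finRange n with
  | nil => exact SemiconjBy.one_right _
  | cons i l ih => exact SemiconjBy.mul_right (reflMat_mul_rootMatrix v i).symm ih

lemma weylGroup_cartanOf_le_subquotient (v : Fin m → Fin n → ℂ) :
    weylGroup (cartanOf v) ≤ subquotient (reflectionGroup v) (rootMatrix v) := by
  rw [weylGroup, Submonoid.closure_le]
  rintro _ ⟨i, rfl⟩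
  exact ⟨_, Submonoid.subset_closure ⟨i, rfl⟩, reflMat_mul_rootMatrix v i⟩

lemma reflectionGroup_le_subquotient (v : Fin n → Fin n → ℂ) (hv : IsUnit (rootMatrix v).det) :
    reflectionGroup v ≤ subquotient (weylGroup (cartanOf v)) (rootMatrix v)⁻¹ := by
  rw [reflectionGroup, Submonoid.closure_le]
  rintro _ ⟨i, rfl⟩
  refine ⟨_, simpleReflection_mem_weylGroup _ i, ?_⟩
  set A := rootMatrix v
  set s := simpleReflection (cartanOf v) i
  calc s * A⁻¹ = A⁻¹ * (A * s * A⁻¹) := by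
        rw [Matrix.mul_assoc, nonsing_inv_mul_cancel_left _ _ hv]
    _ = A⁻¹ * reflMat (v i) (-1) := by
        rw [← reflMat_mul_rootMatrix, mul_nonsing_inv_cancel_right _ _ hv]

lemma subquotient_reflectionGroup (v : Fin n → Fin n → ℂ) (hv : IsUnit (rootMatrix v).det)
    (L : Matrix (Fin n) (Fin m) ℂ) :
    subquotient (reflectionGroup v) (rootMatrix v * L) =
      subquotient (weylGroup (cartanOf v)) L := by
  refine le_antisymm ?_ ?_
  · have h := (subquotient_mono (reflectionGroup_le_subquotient v hv) (rootMatrix v * L)).trans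
      (subquotient_subquotient_le _ _ _)
    rwa [nonsing_inv_mul_cancel_left _ _ hv] at h
  · exact (subquotient_mono (weylGroup_cartanOf_le_subquotient v) L).trans
      (subquotient_subquotient_le _ _ _)

lemma eigSpace_eq_range {C : Matrix (Fin n) (Fin n) ℂ} {P : Matrix (Fin n) (Fin m) ℂ}
    {Q : Matrix (Fin m) (Fin n) ℂ} {μ c : ℂ} (hP : C * P = μ • P) (hQ : P * Q = c • 1 - C)
    (hc : c ≠ μ) : eigSpace C μ = LinearMap.range P.mulVecLin := by
  ext x
  rw [eigSpace, Module.End.mem_eigenspace_iff, mulVecLin_apply]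
  constructor
  · intro hx
    have hPQ : P *ᵥ (Q *ᵥ x) = (c - μ) • x := by
      rw [mulVec_mulVec, hQ, sub_mulVec, smul_mulVec, one_mulVec, hx, sub_smul]
    refine ⟨(c - μ)⁻¹ • Q *ᵥ x, ?_⟩
    rw [map_smul, mulVecLin_apply, hPQ, inv_smul_smul₀ (sub_ne_zero.mpr hc)]
  · rintro ⟨t, rfl⟩
    rw [mulVecLin_apply, mulVec_mulVec, hP, smul_mulVec]

end ReflectionGroup

section SignedPermutations

variable {ι : Type*} [Fintype ι]

lemma even_sum_of_even_dotProduct_self {x : ι → ℤ} (hx : Even (x ⬝ᵥ x)) : Even (∑ i, x i) := by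
  have h : Even (∑ i, x i * (x i - 1)) := Finset.even_sum _ fun i _ => Int.even_mul_pred_self (x i)
  have hsum : ∑ i, x i = x ⬝ᵥ x - ∑ i, x i * (x i - 1) := by
    simp only [dotProduct, mul_sub, mul_one, Finset.sum_sub_distrib, sub_sub_cancel]
  exact hsum ▸ hx.sub h

variable [DecidableEq ι]

lemma exists_eq_single_unit_of_dotProduct_self_eq_one {x : ι → ℤ} (hx : x ⬝ᵥ x = 1) :
    ∃ (j : ι) (ε : ℤˣ), x = Pi.single j (ε : ℤ) := by
  obtain ⟨j, hj⟩ : ∃ j, x j ≠ 0 := by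
    by_contra! h
    simp [funext h] at hx
  have hsplit : x j * x j + ∑ i ∈ Finset.univ.erase j, x i * x i = 1 := by
    rw [Finset.add_sum_erase _ (fun i => x i * x i) (Finset.mem_univ j)]
    exact hx
  have hrest : 0 ≤ ∑ i ∈ Finset.univ.erase j, x i * x i :=
    Finset.sum_nonneg fun i _ => mul_self_nonneg (x i)
  have hpos : 0 < x j * x j := mul_self_pos.mpr hj
  have hunit : x j * x j = 1 := by linarith
  have hzero : ∀ i ∈ Finset.univ.erase j, x i * x i = 0 :=
    (Finset.sum_eq_zero_iff_of_nonneg fun i _ => mul_self_nonneg (x i)).mp (by linarith)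
  refine ⟨j, ⟨x j, x j, hunit, hunit⟩, funext fun i => ?_⟩
  rcases eq_or_ne i j with rfl | hij
  · simp
  · simpa [hij] using hzero i (by simp [hij])

lemma exists_eq_diagonal_mul_permMatrix {U : Matrix ι ι ℤ} (hU : Uᵀ * U = 1) :
    ∃ (ε : ι → ℤˣ) (σ : Equiv.Perm ι),
      U = diagonal (fun i => (ε i : ℤ)) * σ.permMatrix ℤ := by
  have hU' : U * Uᵀ = 1 := mul_eq_one_comm.mp hU
  have hrow (i i' : ι) : U i ⬝ᵥ U i' = (1 : Matrix ι ι ℤ) i i' := by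
    rw [← hU']
    rfl
  choose f ε hf using fun i =>
    exists_eq_single_unit_of_dotProduct_self_eq_one ((hrow i i).trans (one_apply_eq i))
  have hinj : Function.Injective f := by
    intro i i' h
    by_contra hne
    have := hrow i i'
    rw [hf i, hf i', h, one_apply_ne hne] at this
    simp at this
  refine ⟨ε, Equiv.ofBijective f (Finite.injective_iff_bijective.mp hinj), ?_⟩
  ext i j
  simp [diagonal_mul, hf i, Pi.single_apply, PEquiv.toMatrix_apply, eq_comm]

end SignedPermutations

section TypeF4

/-- The simple reflections of `F₄` with respect to the roots `rootsF4`, which are rational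
matrices although the roots are not. -/
def reflF4 : Fin 4 → Matrix (Fin 4) (Fin 4) ℚ :=
  ![swap ℚ 0 1, swap ℚ 1 2, diagonal ![1, 1, -1, 1], 1 - of fun _ _ => 1 / 2]

/-- The Weyl group of type `F₄` as a group of rational orthogonal `4 × 4` matrices. -/
def weylF4 : Submonoid (Matrix (Fin 4) (Fin 4) ℚ) :=
  Submonoid.closure (Set.range reflF4)

lemma reflF4_mem (i : Fin 4) : reflF4 i ∈ weylF4 := Submonoid.subset_closure ⟨i, rfl⟩

lemma transpose_reflF4_mul_self (i : Fin 4) : (reflF4 i)ᵀ * reflF4 i = 1 := by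
  revert i
  decide +kernel

lemma swap_two_three_mem_weylF4 : swap ℚ 2 3 ∈ weylF4 := by
  set d : Matrix (Fin 4) (Fin 4) ℚ := diagonal ![-1, -1, 1, 1]
  have flip : diagonal ![1, -1, 1, 1] ∈ weylF4 := by
    have : diagonal ![1, -1, 1, 1] = reflF4 1 * reflF4 2 * reflF4 1 := by decide +kernel
    rw [this]
    exact mul_mem (mul_mem (reflF4_mem 1) (reflF4_mem 2)) (reflF4_mem 1)
  have hdmem : d ∈ weylF4 := by
    have : d = diagonal ![1, -1, 1, 1] * (reflF4 0 * diagonal ![1, -1, 1, 1] * reflF4 0) := by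
      decide +kernel
    rw [this]
    exact mul_mem flip (mul_mem (mul_mem (reflF4_mem 0) flip) (reflF4_mem 0))
  have : swap ℚ 2 3 = reflF4 2 * reflF4 0 * (reflF4 3 * d * reflF4 3) * reflF4 2 := by
    decide +kernel
  rw [this]
  exact mul_mem (mul_mem (mul_mem (reflF4_mem 2) (reflF4_mem 0))
    (mul_mem (mul_mem (reflF4_mem 3) hdmem) (reflF4_mem 3))) (reflF4_mem 2)

lemma permMatrix_mem_weylF4 (σ : Equiv.Perm (Fin 4)) : σ.permMatrix ℚ ∈ weylF4 := by
  have hle : (⊤ : Submonoid (Equiv.Perm (Fin 4))) ≤ weylF4.comap permMatrixHom := by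
    rw [← Equiv.Perm.mclosure_swap_castSucc_succ 3, Submonoid.closure_le]
    rintro _ ⟨i, rfl⟩
    change (Equiv.swap i.castSucc i.succ)⁻¹.permMatrix ℚ ∈ weylF4
    rw [Equiv.swap_inv]
    fin_cases i
    · exact reflF4_mem 0
    · exact reflF4_mem 1
    · exact swap_two_three_mem_weylF4
  have : σ⁻¹⁻¹.permMatrix ℚ ∈ weylF4 := hle (Submonoid.mem_top σ⁻¹)
  rwa [inv_inv] at this

lemma swap_mem_weylF4 (i j : Fin 4) : swap ℚ i j ∈ weylF4 :=
  permMatrix_mem_weylF4 (Equiv.swap i j)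

lemma diagonal_unit_mem_weylF4 (ε : Fin 4 → ℤˣ) :
    diagonal (fun i => ((ε i : ℤ) : ℚ)) ∈ weylF4 := by
  let signs : (Fin 4 → ℤˣ) →* Matrix (Fin 4) (Fin 4) ℚ :=
    (diagonalRingHom (Fin 4) ℚ).toMonoidHom.comp
      (((Int.castRingHom ℚ).toMonoidHom.comp (Units.coeHom ℤ)).compLeft (Fin 4))
  have hconj : ∀ i, signs (Pi.mulSingle i (-1)) = swap ℚ i 2 * reflF4 2 * swap ℚ i 2 := by
    decide +kernel
  refine Submonoid.pi_mem_of_mulSingle_mem (H := weylF4.comap signs) ε fun i => ?_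
  rcases Int.units_eq_one_or (ε i) with h | h
  · rw [h, Pi.mulSingle_one]
    exact one_mem _
  · rw [h, Submonoid.mem_comap, hconj]
    exact mul_mem (mul_mem (swap_mem_weylF4 i 2) (reflF4_mem 2)) (swap_mem_weylF4 i 2)

lemma even_or_isUnit_of_dotProduct_self_eq_four {x : Fin 4 → ℤ} (hx : x ⬝ᵥ x = 4) :
    (∀ i, Even (x i)) ∨ ∀ i, IsUnit (x i) := by
  have hmod (i : Fin 4) : x i % 2 = 0 ∧ x i * x i % 4 = 0 ∨ x i % 2 = 1 ∧ x i * x i % 4 = 1 := by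
    rcases Int.emod_two_eq_zero_or_one (x i) with h | h
    · have hdvd := Int.dvd_of_emod_eq_zero h
      exact .inl ⟨h, Int.emod_eq_zero_of_dvd (mul_dvd_mul hdvd hdvd)⟩
    · exact .inr ⟨h, by simpa [sq] using Int.sq_mod_four_eq_one_of_odd (Int.odd_iff.mpr h)⟩
  have hparity : (∀ i, x i % 2 = 0) ∨ ∀ i, x i % 2 = 1 := by
    simp only [dotProduct, Fin.sum_univ_four] at hx
    simp only [Fin.forall_fin_succ, Fin.forall_fin_zero, Fin.succ_zero_eq_one, Fin.succ_one_eq_two,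
      Fin.reduceSucc, and_true] at hmod ⊢
    lia
  refine hparity.imp (fun h i => Int.even_iff.mpr (h i)) fun h i => ?_
  have hnonneg (k : Fin 4) : 0 ≤ x k * x k - 1 := by
    have := mul_self_nonneg (x k)
    have := hmod k
    have := h k
    lia
  have hsum : ∑ k, (x k * x k - 1) = 0 := by
    rw [Finset.sum_sub_distrib, ← dotProduct, hx]
    rfl
  have hi := (Finset.sum_eq_zero_iff_of_nonneg fun k _ => hnonneg k).mp hsum i (Finset.mem_univ i)
  exact .of_mul_eq_one _ (sub_eq_zero.mp hi)

lemma even_of_dotProduct_eq_zero {x y : Fin 4 → ℤ} (hx : x ⬝ᵥ x = 4) (hy : y ⬝ᵥ y = 4)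
    (hxy : x ⬝ᵥ y = 0) (heven : ∀ i, Even (x i)) (i : Fin 4) : Even (y i) := by
  refine (even_or_isUnit_of_dotProduct_self_eq_four hy).resolve_right (fun hunit => ?_) i
  have hodd (i : Fin 4) : 8 ∣ (x i + y i) ^ 2 - 1 :=
    Int.eight_dvd_sq_sub_one_of_odd ((heven i).add_odd (by
      rcases Int.isUnit_iff.mp (hunit i) with h | h <;> simp [h]))
  have hnorm : (x + y) ⬝ᵥ (x + y) = 8 := by
    rw [add_dotProduct, dotProduct_add, dotProduct_add, dotProduct_comm y x, hx, hy, hxy]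
    norm_num
  simp only [dotProduct, Fin.sum_univ_four, Pi.add_apply, ← sq] at hnorm
  have := hodd 0
  have := hodd 1
  have := hodd 2
  have := hodd 3
  lia

lemma col_dotProduct_col {X : Matrix (Fin 4) (Fin 4) ℤ} (hX : Xᵀ * X = 4) (j k : Fin 4) :
    Xᵀ j ⬝ᵥ Xᵀ k = if j = k then 4 else 0 := by
  have : (Xᵀ * X) j k = if j = k then 4 else 0 := by
    rw [hX, ← diagonal_ofNat, diagonal_apply]
  exact this

lemma half_smul_mem_weylF4_of_even {X : Matrix (Fin 4) (Fin 4) ℤ} (hX : Xᵀ * X = 4)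
    (heven : ∀ i j, Even (X i j)) :
    (1 / 2 : ℚ) • X.map (Int.castRingHom ℚ) ∈ weylF4 := by
  choose U hU using fun i j => even_iff_exists_two_mul.mp (heven i j)
  have hXU : X = (2 : ℤ) • of U := Matrix.ext hU
  have horth : (of U)ᵀ * of U = 1 := by
    have h4 : (4 : ℤ) • ((of U)ᵀ * of U) = (4 : ℤ) • (1 : Matrix (Fin 4) (Fin 4) ℤ) := by
      calc (4 : ℤ) • ((of U)ᵀ * of U) = Xᵀ * X := by
            rw [hXU, transpose_smul, smul_mul_smul_comm]
            norm_num
        _ = (4 : ℤ) • 1 := by rw [hX, zsmul_one]; rfl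
    exact smul_right_injective _ (by norm_num) h4
  obtain ⟨ε, σ, hεσ⟩ := exists_eq_diagonal_mul_permMatrix horth
  have : (1 / 2 : ℚ) • X.map (Int.castRingHom ℚ) =
      diagonal (fun i => ((ε i : ℤ) : ℚ)) * σ.permMatrix ℚ := by
    ext i j
    have hUij : U i j = (diagonal (fun i => (ε i : ℤ)) * σ.permMatrix ℤ) i j := congrFun₂ hεσ i j
    simp [hU, hUij, diagonal_mul, PEquiv.toMatrix_apply]
  rw [this]
  exact mul_mem (diagonal_unit_mem_weylF4 ε) (permMatrix_mem_weylF4 σ)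

lemma half_smul_mem_weylF4_of_even_col {X : Matrix (Fin 4) (Fin 4) ℤ} (hX : Xᵀ * X = 4)
    {j : Fin 4} (hj : ∀ i, Even (X i j)) :
    (1 / 2 : ℚ) • X.map (Int.castRingHom ℚ) ∈ weylF4 := by
  refine half_smul_mem_weylF4_of_even hX fun i k => ?_
  rcases eq_or_ne j k with rfl | hjk
  · exact hj i
  · exact even_of_dotProduct_eq_zero (x := Xᵀ j) (y := Xᵀ k) (by simp [col_dotProduct_col hX])
      (by simp [col_dotProduct_col hX]) (by simp [col_dotProduct_col hX, hjk]) hj i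

lemma exists_map_eq_reflF4_three_mul {Z : Matrix (Fin 4) (Fin 4) ℤ} (hZ : Zᵀ * Z = 4) :
    ∃ Y : Matrix (Fin 4) (Fin 4) ℤ, Yᵀ * Y = 4 ∧
      Y.map (Int.castRingHom ℚ) = reflF4 3 * Z.map (Int.castRingHom ℚ) := by
  have hsum (k : Fin 4) : Even (∑ i, Z i k) :=
    even_sum_of_even_dotProduct_self (x := Zᵀ k) (by
      rw [col_dotProduct_col hZ, if_pos rfl]
      decide)
  choose c hc using fun k => even_iff_exists_two_mul.mp (hsum k)
  set Y : Matrix (Fin 4) (Fin 4) ℤ := of fun i k => Z i k - c k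
  have hY : Y.map (Int.castRingHom ℚ) = reflF4 3 * Z.map (Int.castRingHom ℚ) := by
    ext i k
    have : ∑ i, (Z i k : ℚ) = 2 * c k := mod_cast hc k
    simp [Y, reflF4, sub_mul, mul_apply (M := of _), ← Finset.mul_sum, this]
  refine ⟨Y, map_injective (Int.castRingHom ℚ).injective_int ?_, hY⟩
  dsimp only
  rw [← hZ, Matrix.map_mul, Matrix.map_mul, transpose_map, hY, transpose_mul, Matrix.mul_assoc,
    ← Matrix.mul_assoc _ (reflF4 3), transpose_reflF4_mul_self, Matrix.one_mul, transpose_map]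

lemma half_smul_mem_weylF4_of_col {Z : Matrix (Fin 4) (Fin 4) ℤ} (hZ : Zᵀ * Z = 4)
    (hcol : ∀ i, Z i 0 = ![-1, 1, 1, 1] i) :
    (1 / 2 : ℚ) • Z.map (Int.castRingHom ℚ) ∈ weylF4 := by
  obtain ⟨Y, hYY, hY⟩ := exists_map_eq_reflF4_three_mul hZ
  have hrefl : ∀ i, ∑ k, reflF4 3 i k * (Int.castRingHom ℚ) (![-1, 1, 1, 1] k) =
      (Int.castRingHom ℚ) (![-2, 0, 0, 0] i) := by
    decide +kernel
  have hYcol (i : Fin 4) : Y i 0 = ![-2, 0, 0, 0] i := by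
    refine (Int.castRingHom ℚ).injective_int ?_
    rw [← hrefl i]
    simpa only [mul_apply, map_apply, hcol] using congrFun₂ hY i 0
  have heven (i : Fin 4) : Even (Y i 0) := by
    rw [hYcol]
    revert i
    decide
  have : (1 / 2 : ℚ) • Z.map (Int.castRingHom ℚ) =
      reflF4 3 * ((1 / 2 : ℚ) • Y.map (Int.castRingHom ℚ)) := by
    have hsq : reflF4 3 * reflF4 3 = 1 := by decide +kernel
    rw [hY, Matrix.mul_smul, ← Matrix.mul_assoc, hsq, Matrix.one_mul]
  rw [this]
  exact mul_mem (reflF4_mem 3) (half_smul_mem_weylF4_of_even_col hYY heven)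

theorem half_smul_mem_weylF4 {X : Matrix (Fin 4) (Fin 4) ℤ} (hX : Xᵀ * X = 4) :
    (1 / 2 : ℚ) • X.map (Int.castRingHom ℚ) ∈ weylF4 := by
  have hcol : Xᵀ 0 ⬝ᵥ Xᵀ 0 = 4 := by simp [col_dotProduct_col hX]
  rcases even_or_isUnit_of_dotProduct_self_eq_four hcol with heven | hunit
  · exact half_smul_mem_weylF4_of_even_col hX heven
  choose u hu using hunit
  set ε : Fin 4 → ℤˣ := fun i => ![-1, 1, 1, 1] i * u i
  set D : Matrix (Fin 4) (Fin 4) ℤ := diagonal fun i => (ε i : ℤ) with hD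
  have hDD : D * D = 1 := by
    simp [hD, diagonal_mul_diagonal, ← Units.val_mul]
  have hZ : (D * X)ᵀ * (D * X) = 4 := by
    rw [transpose_mul, Matrix.mul_assoc, ← Matrix.mul_assoc _ D, hD, diagonal_transpose, ← hD, hDD,
      Matrix.one_mul, hX]
  have hZcol (i : Fin 4) : (D * X) i 0 = ![-1, 1, 1, 1] i := by
    rw [hD, diagonal_mul, ← transpose_apply X, ← hu, ← Units.val_mul, mul_assoc, Int.units_mul_self,
      mul_one]
    revert i
    decide
  have : (1 / 2 : ℚ) • X.map (Int.castRingHom ℚ) =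
      diagonal (fun i => ((ε i : ℤ) : ℚ)) *
        ((1 / 2 : ℚ) • (D * X).map (Int.castRingHom ℚ)) := by
    have hDmap : diagonal (fun i => ((ε i : ℤ) : ℚ)) = D.map (Int.castRingHom ℚ) := by
      simp [hD, diagonal_map]
    rw [hDmap, Matrix.mul_smul, ← Matrix.map_mul, ← Matrix.mul_assoc, hDD, Matrix.one_mul]
  rw [this]
  exact mul_mem (diagonal_unit_mem_weylF4 ε) (half_smul_mem_weylF4_of_col hZ hZcol)

end TypeF4

section TypeE6

/-- The Cartan matrix of type `E₆`. The simple roots are numbered as in `rootsE6`, along the chain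
`0 - 1 - 2 - 3 - 4` with `5` attached to `2`, which is Bourbaki's numbering up to a cycle. -/
def cartanE6 : Matrix (Fin 6) (Fin 6) ℤ :=
  CartanMatrix.E₆.submatrix c[1, 2, 3, 4, 5] c[1, 2, 3, 4, 5]

lemma cartanE6_isSymm : cartanE6.IsSymm := CartanMatrix.E₆_isSymm.submatrix _

lemma cartanE6_diag (i : Fin 6) : cartanE6 i i = 2 := CartanMatrix.E₆_diag _

lemma cartanE6_det : cartanE6.det = 3 := by
  rw [cartanE6, det_submatrix_equiv_self, CartanMatrix.E₆_det]

/-- An orthogonal frame of the `(-1)`-eigenspace of the sixth power of the Coxeter element, in the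
basis of simple roots of `E₆`; each of the four columns has norm 4 for the form `cartanE6`. -/
def frameCoords : Matrix (Fin 6) (Fin 4) ℤ :=
  !![1, 1, -1, -1;
     2, 2, 0, -2;
     2, 2, 0, -4;
     1, 1, 1, -3;
     0, 0, 0, -2;
     2, 0, 0, -2]

lemma coxeterElement_pow_six_mul_frameCoords :
    coxeterElement cartanE6 ^ 6 * frameCoords = -frameCoords := by
  decide +kernel

lemma gram_frameCoords : frameCoordsᵀ * cartanE6 * frameCoords = (4 : ℤ) • 1 := by
  decide +kernel

lemma frameCoords_mul_transpose_mul_cartanE6 :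
    frameCoords * (frameCoordsᵀ * cartanE6) = (2 : ℤ) • (1 - coxeterElement cartanE6 ^ 6) := by
  decide +kernel

lemma exists_mul_frameCoords_eq_two_smul_one :
    ∃ Q : Matrix (Fin 4) (Fin 6) ℤ, Q * frameCoords = (2 : ℤ) • 1 :=
  ⟨!![0, 1, -1, 0, 0, 1; 0, 1, 0, 0, 0, -1; -2, 1, 0, 0, 0, 0; 0, 1, -1, 0, 0, 0],
    by decide +kernel⟩

lemma exists_mem_weylGroup_mul_frameCoords (i : Fin 4) :
    ∃ N ∈ weylGroup cartanE6, N.map (Int.castRingHom ℚ) * frameCoords.map (Int.castRingHom ℚ) =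
      frameCoords.map (Int.castRingHom ℚ) * reflF4 i := by
  set s := simpleReflection cartanE6
  have hs (j : Fin 6) : s j ∈ weylGroup cartanE6 := simpleReflection_mem_weylGroup _ j
  fin_cases i
  · exact ⟨s 5, hs 5, by decide +kernel⟩
  · exact ⟨s 0 * s 1 * s 2 * s 1 * s 0,
      mul_mem (mul_mem (mul_mem (mul_mem (hs 0) (hs 1)) (hs 2)) (hs 1)) (hs 0), by decide +kernel⟩
  · exact ⟨s 0 * s 3, mul_mem (hs 0) (hs 3), by decide +kernel⟩
  · exact ⟨s 1 * s 4, mul_mem (hs 1) (hs 4), by decide +kernel⟩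

lemma transpose_mul_self_eq_four_of_mem_weylGroup
    {N : Matrix (Fin 6) (Fin 6) ℤ} (hN : N ∈ weylGroup cartanE6) {X : Matrix (Fin 4) (Fin 4) ℤ}
    (hX : frameCoords * X = (2 : ℤ) • (N * frameCoords)) :
    Xᵀ * X = 4 := by
  have hform : Nᵀ * cartanE6 * N = cartanE6 :=
    transpose_mul_mul_of_mem_weylGroup cartanE6_isSymm cartanE6_diag hN
  have h4 : (4 : ℤ) • (Xᵀ * X) = (4 : ℤ) • (4 : ℤ) • (1 : Matrix (Fin 4) (Fin 4) ℤ) := by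
    calc (4 : ℤ) • (Xᵀ * X) = Xᵀ * (frameCoordsᵀ * cartanE6 * frameCoords) * X := by
          rw [gram_frameCoords, Matrix.mul_smul, Matrix.mul_one,
            Matrix.smul_mul]
      _ = (frameCoords * X)ᵀ * cartanE6 * (frameCoords * X) := by
          simp only [transpose_mul, Matrix.mul_assoc]
      _ = (4 : ℤ) • (frameCoordsᵀ * (Nᵀ * cartanE6 * N) * frameCoords) := by
          simp only [hX, transpose_smul, transpose_mul, Matrix.smul_mul, Matrix.mul_smul, smul_smul,
            Matrix.mul_assoc]
          norm_num
      _ = (4 : ℤ) • (4 : ℤ) • 1 := by rw [hform, gram_frameCoords]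
  rw [smul_right_injective _ (by norm_num) h4, zsmul_one]
  rfl

variable {K : Type*} [Field K] [CharZero K]

lemma exists_int_eq_half_smul {N : Matrix (Fin 6) (Fin 6) ℤ} {M' : Matrix (Fin 4) (Fin 4) K}
    (h : N.map (Int.castRingHom K) * frameCoords.map (Int.castRingHom K) =
      frameCoords.map (Int.castRingHom K) * M') :
    ∃ X : Matrix (Fin 4) (Fin 4) ℤ, frameCoords * X = (2 : ℤ) • (N * frameCoords) ∧
      M' = (1 / 2 : K) • X.map (Int.castRingHom K) := by
  obtain ⟨Q, hQ⟩ := exists_mul_frameCoords_eq_two_smul_one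
  have hX : (Q * (N * frameCoords)).map (Int.castRingHom K) = (2 : ℤ) • M' := by
    rw [Matrix.map_mul, Matrix.map_mul, h, ← Matrix.mul_assoc, ← Matrix.map_mul, hQ,
      Matrix.map_smul _ _ (map_zsmul _ _), Matrix.map_one _ (map_zero _) (map_one _),
      Matrix.smul_mul, Matrix.one_mul]
  refine ⟨Q * (N * frameCoords), map_injective (Int.castRingHom K).injective_int ?_, ?_⟩
  · dsimp only
    rw [Matrix.map_mul, hX, Matrix.mul_smul, ← h, ← Matrix.map_mul,
      Matrix.map_smul _ _ (map_zsmul _ _)]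
  · rw [hX, ← Int.cast_smul_eq_zsmul K, smul_smul]
    norm_num

variable (K) in
theorem subquotient_weylGroup_cartanE6 :
    subquotient (weylGroup (cartanE6.map (Int.castRingHom K)))
        (frameCoords.map (Int.castRingHom K)) =
      weylF4.map (Rat.castHom K).mapMatrix := by
  refine le_antisymm ?_ ?_
  · rintro M' ⟨M, hM, hMM'⟩
    rw [weylGroup_map] at hM
    obtain ⟨N, hN, rfl⟩ := hM
    obtain ⟨X, hX, rfl⟩ := exists_int_eq_half_smul hMM'
    refine ⟨_, half_smul_mem_weylF4 (transpose_mul_self_eq_four_of_mem_weylGroup hN hX), ?_⟩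
    ext i j
    simp
  · rw [weylF4, MonoidHom.map_mclosure, Submonoid.closure_le]
    rintro _ ⟨_, ⟨i, rfl⟩, rfl⟩
    obtain ⟨N, hN, hNi⟩ := exists_mem_weylGroup_mul_frameCoords i
    refine ⟨N.map (Int.castRingHom K), ?_, ?_⟩
    · rw [weylGroup_map]
      exact ⟨N, hN, rfl⟩
    · have h := congrArg (Matrix.map · (Rat.castHom K)) hNi
      have hcomp : Rat.castHom K ∘ Int.castRingHom ℚ = Int.castRingHom K := by
        ext k
        simp
      simpa only [Matrix.map_mul, RingHom.mapMatrix_apply, Matrix.map_map, hcomp] using h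

end TypeE6

section Roots

lemma ofReal_sqrt_mul_self {x : ℝ} (hx : 0 ≤ x) : (√x : ℂ) * √x = x := by
  rw [← Complex.ofReal_mul, Real.mul_self_sqrt hx]

/-- The simple roots of `G₃₅ = E₆`. -/
def rootsE6 : Fin 6 → Fin 6 → ℂ :=
  ![![0, 1, -1, 0, 1 / √2, √(3 / 2)],
    ![0, 0, 1, -1, -√2, 0],
    ![0, 0, 0, 2, 0, 0],
    ![0, 0, 1, -1, √2, 0],
    ![0, 1, -1, 0, -(1 / √2), -√(3 / 2)],
    ![1, -1, -1, -1, 0, 0]]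

/-- The simple roots of `G₂₈ = F₄`. -/
def rootsF4 : Fin 4 → Fin 4 → ℂ :=
  ![![1, -1, 0, 0], ![0, 1, -1, 0], ![0, 0, √2, 0],
    ![-(1 / √2), -(1 / √2), -(1 / √2), -(1 / √2)]]

lemma herm_rootsE6 (i j : Fin 6) : herm (rootsE6 j) (rootsE6 i) = 2 * cartanE6 i j := by
  have h2 : (√2 : ℂ) * √2 = 2 := by simpa using ofReal_sqrt_mul_self (x := 2) (by norm_num)
  have h3 : (√(3 / 2) : ℂ) * √(3 / 2) = 3 / 2 := by
    simpa using ofReal_sqrt_mul_self (x := 3 / 2) (by norm_num)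
  have hinv : (√2 : ℂ)⁻¹ = √2 / 2 := by
    refine inv_eq_of_mul_eq_one_right ?_
    rw [mul_div_assoc', h2, div_self two_ne_zero]
  have hconj (i k : Fin 6) : (starRingEnd ℂ) (rootsE6 i k) = rootsE6 i k := by
    fin_cases i <;> fin_cases k <;> simp [rootsE6, Complex.conj_ofReal, Complex.conj_ofNat]
  have hcartan : cartanE6 = !![2, -1, 0, 0, 0, 0; -1, 2, -1, 0, 0, 0; 0, -1, 2, -1, 0, -1;
      0, 0, -1, 2, -1, 0; 0, 0, 0, -1, 2, 0; 0, 0, -1, 0, 0, 2] := by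
    decide +kernel
  simp only [herm, hconj, Fin.sum_univ_six, hcartan]
  fin_cases i <;> fin_cases j <;>
    simp only [rootsE6, of_apply, cons_val, Fin.reduceFinMk, one_div, hinv] <;>
    grind

lemma reflMat_rootsF4 (i : Fin 4) :
    reflMat (rootsF4 i) (-1) = (reflF4 i).map (Rat.castHom ℂ) := by
  have h2 : (√2 : ℂ) * √2 = 2 := by simpa using ofReal_sqrt_mul_self (x := 2) (by norm_num)
  have hinv : (√2 : ℂ)⁻¹ * (√2 : ℂ)⁻¹ = 1 / 2 := by
    rw [← mul_inv, h2, one_div]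
  have hconj (i k : Fin 4) : (starRingEnd ℂ) (rootsF4 i k) = rootsF4 i k := by
    fin_cases i <;> fin_cases k <;> simp [rootsF4, Complex.conj_ofReal]
  have hproj : reflF4 i = 1 - ![!![1, -1, 0, 0; -1, 1, 0, 0; 0, 0, 0, 0; 0, 0, 0, 0],
      !![0, 0, 0, 0; 0, 1, -1, 0; 0, -1, 1, 0; 0, 0, 0, 0],
      !![0, 0, 0, 0; 0, 0, 0, 0; 0, 0, 2, 0; 0, 0, 0, 0],
      of fun _ _ => 1 / 2] i := by
    revert i
    decide +kernel
  have hnorm : herm (rootsF4 i) (rootsF4 i) = 2 := by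
    simp only [herm, hconj, Fin.sum_univ_four]
    fin_cases i <;> simp [rootsF4, h2, hinv] <;> norm_num
  rw [reflMat_neg_one, hnorm, div_self two_ne_zero, one_smul, hproj]
  ext j k
  rw [Matrix.sub_apply, vecMulVec_apply, Pi.star_apply, ← starRingEnd_apply, hconj]
  fin_cases i <;> fin_cases j <;> fin_cases k <;> simp [rootsF4, h2, hinv]

lemma reflectionGroup_rootsF4 :
    reflectionGroup rootsF4 = weylF4.map (Rat.castHom ℂ).mapMatrix := by
  rw [weylF4, MonoidHom.map_mclosure, ← Set.range_comp, reflectionGroup]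
  congr 1
  ext M
  simp [reflMat_rootsF4, eq_comm]

lemma cartanOf_rootsE6 : cartanOf rootsE6 = cartanE6.map (Int.castRingHom ℂ) := by
  ext i j
  rw [cartanOf, of_apply, herm_rootsE6, herm_rootsE6, cartanE6_diag, map_apply, eq_intCast]
  push_cast
  ring

lemma isUnit_det_rootMatrix_rootsE6 : IsUnit (rootMatrix rootsE6).det := by
  have hgram : (rootMatrix rootsE6)ᴴ * rootMatrix rootsE6 =
      (2 : ℂ) • cartanE6.map (Int.castRingHom ℂ) := by
    ext i j
    rw [conjTranspose_rootMatrix_mul_rootMatrix]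
    exact herm_rootsE6 i j
  have hdet : (rootMatrix rootsE6)ᴴ.det * (rootMatrix rootsE6).det = 2 ^ 6 * 3 := by
    rw [← det_mul, hgram, det_smul, Fintype.card_fin, ← RingHom.mapMatrix_apply,
      ← RingHom.map_det, cartanE6_det, map_ofNat]
  refine isUnit_iff_ne_zero.mpr fun h => ?_
  norm_num [h] at hdet

/-- The columns of this matrix are the frame `frameCoords`, in the standard coordinates of `ℂ⁶`. -/
def frameVectors : Matrix (Fin 6) (Fin 4) ℂ :=
  rootMatrix rootsE6 * frameCoords.map (Int.castRingHom ℂ)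

lemma mulVecLin_frameVectors_injective : Function.Injective frameVectors.mulVecLin := by
  obtain ⟨Q, hQ⟩ := exists_mul_frameCoords_eq_two_smul_one
  have hQ' : Q.map (Int.castRingHom ℂ) * frameCoords.map (Int.castRingHom ℂ) = (2 : ℤ) • 1 := by
    rw [← Matrix.map_mul, hQ, Matrix.map_smul _ _ (map_zsmul _ _),
      Matrix.map_one _ (map_zero _) (map_one _)]
  have hF : Function.Injective (frameCoords.map (Int.castRingHom ℂ)).mulVec := by
    intro x y h
    have h2 := congrArg (Q.map (Int.castRingHom ℂ) *ᵥ ·) h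
    simpa only [mulVec_mulVec, hQ', smul_mulVec, one_mulVec, smul_right_inj (two_ne_zero' ℤ)]
      using h2
  have hA : Function.Injective (rootMatrix rootsE6).mulVec :=
    mulVec_injective_of_isUnit ((isUnit_iff_isUnit_det _).mpr isUnit_det_rootMatrix_rootsE6)
  rw [frameVectors, mulVecLin_mul]
  exact hA.comp hF

lemma eigSpace_coxeter_pow_six :
    eigSpace ((List.ofFn fun i => reflMat (rootsE6 i) (-1)).prod ^ 6) (-1) =
      LinearMap.range frameVectors.mulVecLin := by
  set f := Int.castRingHom ℂ
  set A := rootMatrix rootsE6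
  set g := (List.ofFn fun i => reflMat (rootsE6 i) (-1)).prod
  have hgA : g ^ 6 * A = A * (coxeterElement cartanE6 ^ 6).map f := by
    have h := ((semiconjBy_rootMatrix_coxeterElement rootsE6).pow_right 6).eq.symm
    rwa [cartanOf_rootsE6, coxeterElement_map, ← RingHom.mapMatrix_apply, ← map_pow] at h
  refine eigSpace_eq_range (Q := (1 / 2 : ℂ) • (frameCoordsᵀ * cartanE6).map f * A⁻¹) (c := 1) ?_ ?_
    (by norm_num)
  · rw [frameVectors, ← Matrix.mul_assoc, hgA, Matrix.mul_assoc, ← Matrix.map_mul,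
      coxeterElement_pow_six_mul_frameCoords, Matrix.map_neg _ (map_neg f), Matrix.mul_neg,
      neg_one_smul]
  · calc frameVectors * ((1 / 2 : ℂ) • (frameCoordsᵀ * cartanE6).map f * A⁻¹) =
        (1 / 2 : ℂ) • (A * (frameCoords * (frameCoordsᵀ * cartanE6)).map f * A⁻¹) := by
          simp only [frameVectors, Matrix.map_mul, Matrix.mul_assoc, Matrix.mul_smul,
            Matrix.smul_mul, A, f]
      _ = A * (1 - coxeterElement cartanE6 ^ 6).map f * A⁻¹ := by
          rw [frameCoords_mul_transpose_mul_cartanE6, Matrix.map_smul _ _ (map_zsmul f _),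
            Matrix.mul_smul, Matrix.smul_mul, ← Int.cast_smul_eq_zsmul ℂ, smul_smul]
          norm_num
      _ = (1 : ℂ) • 1 - g ^ 6 := by
          rw [Matrix.map_sub _ (map_sub f), Matrix.map_one _ (map_zero f) (map_one f),
            Matrix.mul_sub, ← hgA, Matrix.sub_mul, Matrix.mul_one, one_smul,
            mul_nonsing_inv _ isUnit_det_rootMatrix_rootsE6,
            mul_nonsing_inv_cancel_right _ _ isUnit_det_rootMatrix_rootsE6]

theorem subquotient_reflectionGroup_rootsE6 :
    subquotient (reflectionGroup rootsE6) frameVectors = reflectionGroup rootsF4 := by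
  rw [frameVectors, subquotient_reflectionGroup _ isUnit_det_rootMatrix_rootsE6, cartanOf_rootsE6,
    subquotient_weylGroup_cartanE6, reflectionGroup_rootsF4]

end Roots

/-- The `2`-reflection subquotient of `G₃₅ = E₆` is isomorphic to
`G₂₈ = F₄`: with `ζ = e^{πi/6}`, the Coxeter element `g` of `E₆` (product of the six
simple reflections), and `E` the `ζ^6 = -1`-eigenspace of `g^6` (a `4`-dimensional
subspace), there is a `ℂ`-linear isomorphism `ψ : E ≅ ℂ^4` conjugating the reflection
subquotient `π_E(N_E)` onto `G₂₈ = F₄`. -/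
theorem statement_12 (ζ : ℂ) (hζ : ζ = Complex.exp (Real.pi * Complex.I / 6))
    (a : Fin 6 → (Fin 6 → ℂ))
    (ha0 : a 0 = ![0, 1, -1, 0, 1 / (Real.sqrt 2 : ℂ), (Real.sqrt (3 / 2) : ℂ)])
    (ha1 : a 1 = ![0, 0, 1, -1, -(Real.sqrt 2 : ℂ), 0])
    (ha2 : a 2 = ![0, 0, 0, 2, 0, 0])
    (ha3 : a 3 = ![0, 0, 1, -1, (Real.sqrt 2 : ℂ), 0])
    (ha4 : a 4 = ![0, 1, -1, 0, -(1 / (Real.sqrt 2 : ℂ)), -(Real.sqrt (3 / 2) : ℂ)])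
    (ha5 : a 5 = ![1, -1, -1, -1, 0, 0])
    (G35 : Submonoid (Matrix (Fin 6) (Fin 6) ℂ))
    (hG35 : G35 = Submonoid.closure {M | ∃ i : Fin 6, M = reflMat (a i) (-1)})
    (g : Matrix (Fin 6) (Fin 6) ℂ)
    (hg : g = reflMat (a 0) (-1) * reflMat (a 1) (-1) * reflMat (a 2) (-1) *
      reflMat (a 3) (-1) * reflMat (a 4) (-1) * reflMat (a 5) (-1))
    (E : Submodule ℂ (Fin 6 → ℂ)) (hE : E = eigSpace (g ^ 6) (ζ ^ 6))
    (β : Fin 4 → (Fin 4 → ℂ))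
    (hβ0 : β 0 = ![1, -1, 0, 0])
    (hβ1 : β 1 = ![0, 1, -1, 0])
    (hβ2 : β 2 = ![0, 0, (Real.sqrt 2 : ℂ), 0])
    (hβ3 : β 3 = ![-(1 / (Real.sqrt 2 : ℂ)), -(1 / (Real.sqrt 2 : ℂ)),
      -(1 / (Real.sqrt 2 : ℂ)), -(1 / (Real.sqrt 2 : ℂ))])
    (G28 : Submonoid (Matrix (Fin 4) (Fin 4) ℂ))
    (hG28 : G28 = Submonoid.closure {M | ∃ i : Fin 4, M = reflMat (β i) (-1)}) :
    Module.finrank ℂ E = 4 ∧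
    ∃ Φ : (Fin 4 → ℂ) →ₗ[ℂ] (Fin 6 → ℂ), Function.Injective Φ ∧
      LinearMap.range Φ = E ∧
      (G28 : Set (Matrix (Fin 4) (Fin 4) ℂ)) =
        {M' | ∃ M ∈ G35, (∀ v ∈ E, M.mulVec v ∈ E) ∧
          ∀ t : Fin 4 → ℂ, M.mulVec (Φ t) = Φ (M'.mulVec t)} := by
  obtain rfl : a = rootsE6 := by
    funext i
    fin_cases i
    exacts [ha0, ha1, ha2, ha3, ha4, ha5]
  obtain rfl : β = rootsF4 := by
    funext i
    fin_cases i
    exacts [hβ0, hβ1, hβ2, hβ3]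
  have hζ6 : ζ ^ 6 = -1 := by
    rw [hζ, ← Complex.exp_nat_mul, ← Complex.exp_pi_mul_I]
    congr 1
    push_cast
    ring
  have hg' : g = (List.ofFn fun i => reflMat (rootsE6 i) (-1)).prod := by
    simp [hg, List.ofFn_succ, mul_assoc]
  have hrange : LinearMap.range frameVectors.mulVecLin = E := by
    rw [hE, hζ6, hg', eigSpace_coxeter_pow_six]
  refine ⟨?_, frameVectors.mulVecLin, mulVecLin_frameVectors_injective, hrange, ?_⟩
  · rw [← hrange, LinearMap.finrank_range_of_inj mulVecLin_frameVectors_injective,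
      Module.finrank_fin_fun]
  · ext M'
    rw [hG28, hG35, ← hrange, ← reflectionGroup, ← subquotient_reflectionGroup_rootsE6]
    exact mem_subquotient_iff_mulVec

end
end Paper
end
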